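/- Let K > 0 and J ∈ ℝ, and assume φ_{K,J} attains its minimum over [−1,1] at a unique point m* ∈ (−1,1) with φ_{K,J}''(m*) > 0. Then there exists a constant c = c(K,J) > 0 such that for all n ≥ 1, sup_{z∈ℝ} |P_{n,K,J}(W_n ≤ z) − Φ(z)| ≤ c/√n, where Φ is the standard normal distribution function. -/

import Mathlib

/-!
Let `s(k) = log k! - k log k + k`, and let `m_k = (2 k - n) / n` be the magnetization of a
configuration with `k` spins up. The total weight of these configurations is
`n.choose k * exp (n g(m_k)) = exp (-n φ(m_k) + s(n) - s(k) - s(n - k))`, where `φ = I - g`. The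
increments of `s` lie between `0` and `1 / (k + 1)`, which is all that is needed of Stirling's
formula: the constant in it cancels upon normalization.

On the scale `t = √n (x - m*)` the Taylor expansion of `φ` at `m*` and the global bound
`φ(x) - φ(m*) ≥ b (x - m*)²` show that the suitably normalized weights differ from
`exp (-φ''(m*) t² / 2)` by at most `C / √n * exp (-|t|)`. The weights are the values of a step
function with steps of length `2 / √n`, so integration over half-lines gives the approximation of
their partial sums by the normal distribution function, and integration over the line gives that of
the partition function.
-/

open MeasureTheory ProbabilityTheory Real Filter

noncomputable section

/-- The spin value `±1` associated with a Boolean. -/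
def spin (b : Bool) : ℝ := if b then 1 else -1

/-- Total magnetization `S_n(x) = ∑ i, x_i`. -/
def totalMag (n : ℕ) (x : Fin n → Bool) : ℝ := ∑ i, spin (x i)

/-- Magnetization per particle `m_n(x) = S_n(x)/n`. -/
def magPP (n : ℕ) (x : Fin n → Bool) : ℝ := totalMag n x / n

/-- Boltzmann–Gibbs weight of a configuration in the cubic Curie–Weiss model
(the reference factor `2^{-n}` is constant and cancels upon normalization). -/
def cubicWeight (n : ℕ) (K J : ℝ) (x : Fin n → Bool) : ℝ :=
  Real.exp (n * (K / 3 * (magPP n x) ^ 3 + J / 2 * (magPP n x) ^ 2))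

/-- The cubic Curie–Weiss Boltzmann–Gibbs probability measure `P_{n,K,J}`. -/
def cubicMeasure (n : ℕ) (K J : ℝ) : Measure (Fin n → Bool) :=
  (∑ x : Fin n → Bool, ENNReal.ofReal (cubicWeight n K J x))⁻¹ •
    ∑ x : Fin n → Bool, ENNReal.ofReal (cubicWeight n K J x) • Measure.dirac x

/-- The probability of an event under `P_{n,K,J}`, as a real number. -/
def cubicProb (n : ℕ) (K J : ℝ) (s : Set (Fin n → Bool)) : ℝ :=
  (cubicMeasure n K J s).toReal

/-- The binary relative entropy `I(m)`. -/
def binEnt (m : ℝ) : ℝ :=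
  (1 - m) / 2 * Real.log ((1 - m) / 2) + (1 + m) / 2 * Real.log ((1 + m) / 2)

/-- The function `φ_{K,J}(x) = I(x) − (K/3)x³ − (J/2)x²`. -/
def phiKJ (K J : ℝ) (x : ℝ) : ℝ := binEnt x - K / 3 * x ^ 3 - J / 2 * x ^ 2

/-- The standard normal cumulative distribution function. -/
def stdNormalCDF (z : ℝ) : ℝ :=
  (ProbabilityTheory.gaussianReal 0 1 (Set.Iic z)).toReal

end

open Set Asymptotics
open scoped Nat Topology

/-! ### Stirling corrections -/

/-- The part of `log k!` that remains after subtracting `k log k - k`. It grows like `(log k) / 2`;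
`Real.log 0 = 0` makes the value at `k = 0` correct. -/
noncomputable def stirlingCorr (k : ℕ) : ℝ := Real.log k ! - k * Real.log k + k

lemma stirlingCorr_succ_sub {k : ℕ} (hk : k ≠ 0) :
    stirlingCorr (k + 1) - stirlingCorr k = 1 - k * (Real.log (k + 1) - Real.log k) := by
  simp only [stirlingCorr, Nat.factorial_succ, Nat.cast_mul]
  rw [Real.log_mul (by positivity) (by positivity)]
  push_cast
  ring

lemma log_succ_sub_log_mem_Icc {k : ℕ} (hk : k ≠ 0) :
    Real.log (k + 1) - Real.log k ∈ Icc (1 / (k + 1 : ℝ)) (1 / k) := by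
  have hk0 : (0 : ℝ) < k := by positivity
  rw [← Real.log_div (by positivity) hk0.ne']
  constructor
  · refine le_of_eq_of_le ?_ (Real.one_sub_inv_le_log_of_pos (by positivity))
    field_simp
    ring
  · refine (Real.log_le_sub_one_of_pos (by positivity)).trans_eq ?_
    field_simp
    ring

lemma stirlingCorr_mono : Monotone stirlingCorr := by
  refine monotone_nat_of_le_succ fun k => ?_
  rcases eq_or_ne k 0 with rfl | hk
  · simp [stirlingCorr]
  have hlog : k * (Real.log (k + 1) - Real.log k) ≤ k * (1 / k) := by
    gcongr
    exact (log_succ_sub_log_mem_Icc hk).2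
  rw [mul_one_div_cancel (by positivity)] at hlog
  linarith [stirlingCorr_succ_sub hk]

lemma stirlingCorr_nonneg (k : ℕ) : 0 ≤ stirlingCorr k := by
  simpa [stirlingCorr] using stirlingCorr_mono k.zero_le

lemma stirlingCorr_sub_le_log_sub {j k : ℕ} (hj : j ≠ 0) (hjk : j ≤ k) :
    stirlingCorr k - stirlingCorr j ≤ Real.log k - Real.log j := by
  induction k, hjk using Nat.le_induction with
  | base => simp
  | succ k hk ih =>
    have hk0 : k ≠ 0 := by omega
    have hlog : (k + 1) * (1 / (k + 1 : ℝ)) ≤ (k + 1) * (Real.log (k + 1) - Real.log k) := by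
      gcongr
      exact (log_succ_sub_log_mem_Icc hk0).1
    rw [mul_one_div_cancel (by positivity)] at hlog
    push_cast
    linarith [stirlingCorr_succ_sub hk0]

lemma stirlingCorr_le_two_mul_sqrt (n : ℕ) : stirlingCorr n ≤ 2 * √n := by
  rcases eq_or_ne n 0 with rfl | hn
  · simp [stirlingCorr]
  have hlog : Real.log n = 2 * Real.log √n := by
    rw [Real.log_sqrt n.cast_nonneg]
    ring
  have h_one : stirlingCorr 1 = 1 := by simp [stirlingCorr]
  have hsub := stirlingCorr_sub_le_log_sub one_ne_zero (Nat.one_le_iff_ne_zero.2 hn)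
  rw [Nat.cast_one, Real.log_one, h_one, hlog] at hsub
  linarith [Real.log_le_sub_one_of_pos (show 0 < √(n : ℝ) by positivity)]

lemma abs_stirlingCorr_sub_le_of_le {L : ℝ} (hL : 0 < L) {j k : ℕ} (hj : L ≤ j) (hk : L ≤ k) :
    |stirlingCorr k - stirlingCorr j| ≤ |(k : ℝ) - j| / L := by
  wlog hjk : j ≤ k generalizing j k
  · rw [abs_sub_comm, abs_sub_comm (k : ℝ)]
    exact this hk hj (le_of_not_ge hjk)
  have hj0 : (0 : ℝ) < j := hL.trans_le hj
  have hjk' : (j : ℝ) ≤ k := mod_cast hjk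
  rw [abs_of_nonneg (sub_nonneg.2 (stirlingCorr_mono hjk)), abs_of_nonneg (sub_nonneg.2 hjk')]
  calc stirlingCorr k - stirlingCorr j
      ≤ Real.log k - Real.log j := stirlingCorr_sub_le_log_sub (mod_cast hj0.ne') hjk
    _ = Real.log (k / j) := (Real.log_div (hj0.trans_le hjk').ne' hj0.ne').symm
    _ ≤ k / j - 1 := Real.log_le_sub_one_of_pos (div_pos (hj0.trans_le hjk') hj0)
    _ = (k - j) / j := by field_simp
    _ ≤ (k - j) / L := div_le_div_of_nonneg_left (sub_nonneg.2 hjk') hL hj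

lemma abs_stirlingCorr_sub_le_two_mul_sqrt {n j k : ℕ} (hj : j ≤ n) (hk : k ≤ n) :
    |stirlingCorr k - stirlingCorr j| ≤ 2 * √n := by
  have hle {i : ℕ} (hi : i ≤ n) : stirlingCorr i ≤ 2 * √n :=
    (stirlingCorr_mono hi).trans (stirlingCorr_le_two_mul_sqrt n)
  exact abs_sub_le_of_nonneg_of_le (stirlingCorr_nonneg k) (hle hk) (stirlingCorr_nonneg j) (hle hj)

lemma abs_add_one_le_sqrt_mul {x : ℝ} (hx : 1 ≤ x) (D : ℝ) :
    |D| + 1 ≤ √x * (2 + D ^ 2 / x) := by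
  have hs : 1 ≤ √x := Real.one_le_sqrt.2 hx
  have hDx : D ^ 2 / x = (|D| / √x) ^ 2 := by
    rw [div_pow, sq_abs, Real.sq_sqrt (zero_le_one.trans hx)]
  have hcancel : √x * (|D| / √x) = |D| := mul_div_cancel₀ _ (by positivity)
  have hsq : 0 ≤ √x * (|D| / √x - 1 / 2) ^ 2 := by positivity
  rw [hDx]
  linear_combination hsq + 7 / 4 * hs - hcancel

lemma abs_stirlingCorr_sub_le_of_mul_div_two_le {p : ℝ} (hp : 0 < p) {n j k : ℕ} (hn : 1 ≤ n)
    (hjp : |j - n * p| ≤ 1) (hj : n * p / 2 ≤ j) (hk : n * p / 2 ≤ k) :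
    |stirlingCorr k - stirlingCorr j| ≤ 4 / p * (1 + (k - n * p) ^ 2 / n) / √n := by
  set D := (k : ℝ) - n * p
  have hsq : √(n : ℝ) * √n = n := Real.mul_self_sqrt n.cast_nonneg
  have hkj : |(k : ℝ) - j| ≤ |D| + 1 :=
    (abs_sub_le _ (n * p) _).trans (by rw [abs_sub_comm (n * p)]; gcongr)
  calc |stirlingCorr k - stirlingCorr j|
      ≤ |(k : ℝ) - j| / (n * p / 2) := abs_stirlingCorr_sub_le_of_le (by positivity) hj hk
    _ ≤ √n * (2 + D ^ 2 / n) / (√n * √n * p / 2) := by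
      rw [hsq]
      gcongr
      exact hkj.trans (abs_add_one_le_sqrt_mul (mod_cast hn) D)
    _ = 2 / p * (2 + D ^ 2 / n) / √n := by field_simp
    _ ≤ 2 / p * (2 * (1 + D ^ 2 / n)) / √n := by
      gcongr
      linarith [show 0 ≤ D ^ 2 / n by positivity]
    _ = 4 / p * (1 + D ^ 2 / n) / √n := by ring

/-- Near `n p` the correction is Lipschitz with constant `O(1 / n)`. Elsewhere the crude bound
`2 √n = 2 n / √n` is good enough, because there `n = O((k - n p)² / n)`, or else `n = O(1)`. -/
lemma exists_abs_stirlingCorr_sub_le {p : ℝ} (hp : 0 < p) :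
    ∃ A > 0, ∀ n j k : ℕ, 1 ≤ n → j ≤ n → k ≤ n → |j - n * p| ≤ 1 →
      |stirlingCorr k - stirlingCorr j| ≤ A * (1 + (k - n * p) ^ 2 / n) / √n := by
  refine ⟨4 / p + 8 / p ^ 2, by positivity, fun n j k hn hj hk hjp => ?_⟩
  set D := (k : ℝ) - n * p
  by_cases hbulk : |D| ≤ n * p / 2 ∧ 1 ≤ n * p / 2
  · refine (abs_stirlingCorr_sub_le_of_mul_div_two_le hp hn hjp (by linarith [abs_le.1 hjp])
      (by linarith [abs_le.1 hbulk.1])).trans ?_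
    gcongr
    exact le_add_of_nonneg_right (by positivity)
  have hn_le : (n : ℝ) ≤ (2 / p + 4 / p ^ 2) * (1 + D ^ 2 / n) := by
    rcases not_and_or.1 hbulk with hfar | hsmall
    · have hsq_le : (n * p / 2) ^ 2 ≤ D ^ 2 := by
        rw [← sq_abs D]
        exact pow_le_pow_left₀ (by positivity) (not_le.1 hfar).le 2
      calc (n : ℝ) = 4 / p ^ 2 * ((n * p / 2) ^ 2 / n) := by field_simp; norm_num
        _ ≤ 4 / p ^ 2 * (D ^ 2 / n) := by gcongr
        _ ≤ (2 / p + 4 / p ^ 2) * (1 + D ^ 2 / n) := by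
          gcongr <;> exact le_add_of_nonneg_left (by positivity)
    · calc (n : ℝ) ≤ 2 / p * 1 := by rw [mul_one, le_div_iff₀ hp]; linarith
        _ ≤ (2 / p + 4 / p ^ 2) * (1 + D ^ 2 / n) := by
          gcongr <;> exact le_add_of_nonneg_right (by positivity)
  calc |stirlingCorr k - stirlingCorr j| ≤ 2 * √n := abs_stirlingCorr_sub_le_two_mul_sqrt hj hk
    _ = 2 * n / √n := by rw [mul_div_assoc, Real.div_sqrt]
    _ ≤ (4 / p + 8 / p ^ 2) * (1 + D ^ 2 / n) / √n := by
      gcongr ?_ / _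
      linear_combination 2 * hn_le

/-! ### Level weights and the free energy -/

/-- The magnetization per particle of a configuration of `n` spins, `k` of which are up. -/
noncomputable def magLevel (n k : ℕ) : ℝ := (2 * k - n) / n

/-- The exponential rate `I - g` of the level weights of the interaction `g`: the function `φ` of
the model when `g x = K / 3 * x ^ 3 + J / 2 * x ^ 2`. -/
noncomputable def freeEnergy (g : ℝ → ℝ) (x : ℝ) : ℝ := binEnt x - g x

/-- The total weight of the configurations of `n` spins with exactly `k` spins up, for the
interaction `g`. It vanishes for `k > n`, like the binomial coefficient. -/
noncomputable def levelWeight (n : ℕ) (g : ℝ → ℝ) (k : ℕ) : ℝ :=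
  n.choose k * Real.exp (n * g (magLevel n k))

lemma levelWeight_nonneg (n : ℕ) (g : ℝ → ℝ) (k : ℕ) : 0 ≤ levelWeight n g k := by
  unfold levelWeight
  positivity

lemma levelWeight_pos {n k : ℕ} (g : ℝ → ℝ) (hk : k ≤ n) : 0 < levelWeight n g k := by
  have := Nat.choose_pos hk
  unfold levelWeight
  positivity

lemma levelWeight_eq_zero_of_lt {n k : ℕ} (g : ℝ → ℝ) (hk : n < k) : levelWeight n g k = 0 := by
  simp [levelWeight, Nat.choose_eq_zero_of_lt hk]

lemma magLevel_mem_Icc {n k : ℕ} (hk : k ≤ n) : magLevel n k ∈ Icc (-1 : ℝ) 1 := by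
  have hk' : (k : ℝ) ≤ n := mod_cast hk
  refine ⟨?_, div_le_one_of_le₀ (by linarith) n.cast_nonneg⟩
  rw [magLevel, neg_le, ← neg_div]
  exact div_le_one_of_le₀ (by linarith [k.cast_nonneg (α := ℝ)]) n.cast_nonneg

lemma log_choose_eq {n k : ℕ} (hn : n ≠ 0) (hk : k ≤ n) :
    Real.log (n.choose k) = -(n * binEnt (magLevel n k)) +
      (stirlingCorr n - stirlingCorr k - stirlingCorr (n - k)) := by
  have hn0 : (n : ℝ) ≠ 0 := mod_cast hn
  have hdown : (1 - magLevel n k) / 2 = ((n - k : ℕ) : ℝ) / n := by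
    rw [magLevel, Nat.cast_sub hk]
    field_simp
    ring
  have hup : (1 + magLevel n k) / 2 = (k : ℝ) / n := by
    rw [magLevel]
    field_simp
    ring
  have hlog (j : ℕ) : (n : ℝ) * ((j : ℝ) / n * Real.log (j / n)) =
      j * Real.log j - j * Real.log n := by
    rcases eq_or_ne j 0 with rfl | hj
    · simp
    rw [Real.log_div (mod_cast hj) hn0]
    field_simp
  have hlog_choose :
      Real.log n ! = Real.log (n.choose k) + Real.log k ! + Real.log (n - k)! := by
    have hchoose : (n.choose k : ℝ) ≠ 0 := mod_cast (Nat.choose_pos hk).ne'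
    rw [← Nat.choose_mul_factorial_mul_factorial hk, Nat.cast_mul, Nat.cast_mul,
      Real.log_mul (by positivity) (by positivity), Real.log_mul hchoose (by positivity)]
  rw [binEnt, hdown, hup, mul_add, hlog, hlog]
  simp only [stirlingCorr, hlog_choose, Nat.cast_sub hk]
  ring

lemma levelWeight_eq_exp (g : ℝ → ℝ) {n k : ℕ} (hn : n ≠ 0) (hk : k ≤ n) :
    levelWeight n g k = Real.exp (-n * freeEnergy g (magLevel n k) +
      (stirlingCorr n - stirlingCorr k - stirlingCorr (n - k))) := by
  have hchoose : (0 : ℝ) < n.choose k := mod_cast Nat.choose_pos hk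
  rw [levelWeight, ← Real.exp_log hchoose, ← Real.exp_add, log_choose_eq hn hk, freeEnergy]
  congr 1
  ring

lemma continuous_binEnt : Continuous binEnt := by
  have hdown : Continuous fun x : ℝ => (1 - x) / 2 := by fun_prop
  have hup : Continuous fun x : ℝ => (1 + x) / 2 := by fun_prop
  exact (Real.continuous_mul_log.comp hdown).add (Real.continuous_mul_log.comp hup)

lemma contDiffAt_binEnt {x : ℝ} {k : WithTop ℕ∞} (hx : x ∈ Ioo (-1 : ℝ) 1) :
    ContDiffAt ℝ k binEnt x := by
  have hdown : ContDiffAt ℝ k (fun x : ℝ => (1 - x) / 2) x := by fun_prop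
  have hup : ContDiffAt ℝ k (fun x : ℝ => (1 + x) / 2) x := by fun_prop
  exact (hdown.mul (hdown.log (by linarith [hx.2]))).add (hup.mul (hup.log (by linarith [hx.1])))

/-! ### Taylor expansion and growth at a nondegenerate minimum -/

lemma isBigO_sub_taylorWithinEval_univ {E : Type*} [NormedAddCommGroup E] [NormedSpace ℝ E]
    {f : ℝ → E} {m : ℝ} {n : ℕ} (hf : ContDiffAt ℝ (n + 1) f m) :
    (fun x => f x - taylorWithinEval f n univ m x) =O[𝓝 m] fun x => (x - m) ^ (n + 1) := by
  obtain ⟨u, hu, hfu⟩ := hf.contDiffOn (m := (n + 1 : ℕ)) (mod_cast le_rfl) (by simp)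
  obtain ⟨ε, hε, hball⟩ := Metric.mem_nhds_iff.1 hu
  set s := Metric.ball m ε
  have hm : m ∈ s := Metric.mem_ball_self hε
  have hderiv (k : ℕ) : iteratedDerivWithin k f s m = iteratedDeriv k f m :=
    iteratedDerivWithin_of_isOpen Metric.isOpen_ball hm
  have htaylor (x : ℝ) : taylorWithinEval f n univ m x = taylorWithinEval f n s m x := by
    simp only [taylor_within_apply, iteratedDerivWithin_univ, hderiv]
  have hsucc := (taylor_isLittleO (convex_ball m ε) hm (hfu.mono hball)).isBigO
  rw [Metric.isOpen_ball.nhdsWithin_eq hm] at hsucc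
  have hlast : (fun x : ℝ => (((n + 1 : ℝ) * n !)⁻¹ * (x - m) ^ (n + 1)) •
      iteratedDerivWithin (n + 1) f s m) =O[𝓝 m] fun x => (x - m) ^ (n + 1) :=
    .of_bound (‖((n + 1 : ℝ) * n !)⁻¹‖ * ‖iteratedDerivWithin (n + 1) f s m‖) <| .of_forall
      fun x => by rw [norm_smul, norm_mul, mul_right_comm]
  refine (hsucc.add hlast).congr_left fun x => ?_
  rw [htaylor, taylorWithinEval_succ]
  abel

lemma isBigO_principal_of_isCompact {X E F : Type*} [TopologicalSpace X] [Norm E]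
    [SeminormedAddCommGroup F] {S : Set X} (hS : IsCompact S) {f : X → E} {h : X → F}
    (hfh : ∀ x ∈ S, f =O[𝓝[S] x] h) : f =O[𝓟 S] h := by
  refine hS.induction_on (p := fun t => f =O[𝓟 t] h) (by simp)
    (fun s t hst ht => ht.mono (principal_mono.2 hst))
    (fun s t hs ht => by rw [← sup_principal]; exact hs.sup ht) fun x hx => ?_
  obtain ⟨c, hc⟩ := isBigO_iff.1 (hfh x hx)
  exact ⟨_, hc, isBigO_principal.2 ⟨c, fun y hy => hy⟩⟩

lemma isBigO_principal_of_isBigO_nhdsWithin {X E F : Type*} [TopologicalSpace X]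
    [NormedAddCommGroup E] [NormedAddCommGroup F] {S : Set X} {m : X} (hS : IsCompact S)
    {f : X → E} {h : X → F} (hf : ContinuousOn f S) (hh : ContinuousOn h S)
    (hne : ∀ x ∈ S, x ≠ m → h x ≠ 0) (hm : f =O[𝓝[S] m] h) : f =O[𝓟 S] h := by
  refine isBigO_principal_of_isCompact hS fun x hx => ?_
  rcases eq_or_ne x m with rfl | hxm
  · exact hm
  · have hhx := hne x hx hxm
    exact (isBigO_const_of_tendsto (hf x hx).tendsto hhx).trans
      ((isEquivalent_const_iff_tendsto hhx).2 (hh x hx)).symm.isBigO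

section CriticalPoint

variable {f : ℝ → ℝ} {S : Set ℝ} {m : ℝ}

lemma isBigO_sub_quadratic_of_deriv_eq_zero (hf3 : ContDiffAt ℝ 3 f m) (hcrit : deriv f m = 0) :
    (fun x => f x - f m - iteratedDeriv 2 f m / 2 * (x - m) ^ 2) =O[𝓝 m]
      fun x => (x - m) ^ 3 := by
  refine (isBigO_sub_taylorWithinEval_univ (n := 2) (mod_cast hf3)).congr_left fun x => ?_
  simp only [taylorWithinEval_succ, taylor_within_zero_eval, iteratedDerivWithin_univ, zero_add,
    iteratedDeriv_one, hcrit, smul_eq_mul]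
  norm_num
  ring

lemma exists_abs_sub_quadratic_le (hS : IsCompact S) (hf : ContinuousOn f S)
    (hf3 : ContDiffAt ℝ 3 f m) (hcrit : deriv f m = 0) :
    ∃ M, 0 ≤ M ∧
      ∀ x ∈ S, |f x - f m - iteratedDeriv 2 f m / 2 * (x - m) ^ 2| ≤ M * |x - m| ^ 3 := by
  obtain ⟨M, hM, hbound⟩ := (isBigO_principal_of_isBigO_nhdsWithin hS (by fun_prop) (by fun_prop)
    (fun x _ hx => pow_ne_zero 3 (sub_ne_zero.2 hx))
    ((isBigO_sub_quadratic_of_deriv_eq_zero hf3 hcrit).mono nhdsWithin_le_nhds)).exists_nonneg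
  exact ⟨M, hM, fun x hx => by simpa using isBigOWith_principal.1 hbound x hx⟩

lemma exists_mul_sq_le_sub_of_unique_min (hS : IsCompact S) (hf : ContinuousOn f S)
    (hf3 : ContDiffAt ℝ 3 f m) (hcrit : deriv f m = 0) (hconv : 0 < iteratedDeriv 2 f m)
    (hmin : ∀ x ∈ S, x ≠ m → f m < f x) :
    ∃ b > 0, ∀ x ∈ S, b * (x - m) ^ 2 ≤ f x - f m := by
  have hcubic : (fun x => (x - m) ^ 3) =o[𝓝 m]
      fun x => iteratedDeriv 2 f m / 2 * (x - m) ^ 2 :=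
    ((isLittleO_pow_pow (by norm_num : 2 < 3)).comp_tendsto
      (tendsto_sub_nhds_zero_iff.2 tendsto_id)).const_mul_right (by positivity)
  have hlocal : (fun x => (x - m) ^ 2) =O[𝓝 m] fun x => f x - f m :=
    (isBigO_self_const_mul (by positivity) _ _).trans <|
      (((isBigO_sub_quadratic_of_deriv_eq_zero hf3 hcrit).trans_isLittleO hcubic).right_isBigO_add
        ).congr_right fun x => sub_add_cancel _ _
  obtain ⟨c, hc, hbound⟩ := (isBigO_principal_of_isBigO_nhdsWithin hS (by fun_prop) (by fun_prop)
    (fun x hx hxm => (sub_pos.2 (hmin x hx hxm)).ne')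
    (hlocal.mono nhdsWithin_le_nhds)).exists_pos
  refine ⟨c⁻¹, inv_pos.2 hc, fun x hx => ?_⟩
  have hnonneg : 0 ≤ f x - f m := by
    rcases eq_or_ne x m with rfl | hxm
    · simp
    · exact (sub_pos.2 (hmin x hx hxm)).le
  rw [inv_mul_le_iff₀ hc]
  simpa [abs_of_nonneg hnonneg] using isBigOWith_principal.1 hbound x hx

end CriticalPoint

/-! ### Comparison of exponentials -/

lemma abs_exp_sub_exp_le (p q : ℝ) :
    |Real.exp p - Real.exp q| ≤ |p - q| * (Real.exp p + Real.exp q) := by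
  wlog hqp : q ≤ p generalizing p q
  · rw [abs_sub_comm, abs_sub_comm p, add_comm]
    exact this q p (le_of_not_ge hqp)
  rw [abs_of_nonneg (sub_nonneg.2 (Real.exp_le_exp.2 hqp)), abs_of_nonneg (sub_nonneg.2 hqp)]
  calc Real.exp p - Real.exp q
      = Real.exp p * (1 - Real.exp (q - p)) := by
        rw [mul_sub, mul_one, ← Real.exp_add, add_sub_cancel]
    _ ≤ Real.exp p * (p - q) := by
      gcongr Real.exp p * ?_
      linarith [Real.add_one_le_exp (q - p)]
    _ ≤ (p - q) * (Real.exp p + Real.exp q) := by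
      rw [mul_comm]
      have : 0 ≤ p - q := sub_nonneg.2 hqp
      gcongr
      exact le_add_of_nonneg_right (Real.exp_nonneg q)

lemma exp_mul_abs_sub_mul_sq_le {b : ℝ} (hb : 0 < b) (c x : ℝ) :
    Real.exp (c * |x| - b * x ^ 2) ≤ Real.exp ((c + 1) ^ 2 / (4 * b)) * Real.exp (-|x|) := by
  rw [← Real.exp_add, Real.exp_le_exp]
  have hsq : 0 ≤ b * (|x| - (c + 1) / (2 * b)) ^ 2 := by positivity
  have hexpand : b * (|x| - (c + 1) / (2 * b)) ^ 2 =
      b * x ^ 2 - (c + 1) * |x| + (c + 1) ^ 2 / (4 * b) := by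
    rw [← sq_abs x]
    field_simp
    ring
  linarith

lemma one_add_abs_pow_three_le (x : ℝ) : 1 + |x| ^ 3 ≤ 7 * Real.exp |x| := by
  have hcube := Real.pow_div_factorial_le_exp |x| (abs_nonneg x) 3
  have hone := Real.one_le_exp (abs_nonneg x)
  norm_num [Nat.factorial] at hcube
  linarith

lemma one_add_abs_pow_three_mul_exp_le {b : ℝ} (hb : 0 < b) (c x : ℝ) :
    (1 + |x| ^ 3) * Real.exp (c * |x| - b * x ^ 2) ≤
      7 * Real.exp ((c + 2) ^ 2 / (4 * b)) * Real.exp (-|x|) :=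
  calc (1 + |x| ^ 3) * Real.exp (c * |x| - b * x ^ 2)
      ≤ 7 * Real.exp |x| * Real.exp (c * |x| - b * x ^ 2) := by
        gcongr
        exact one_add_abs_pow_three_le x
    _ = 7 * Real.exp ((c + 1) * |x| - b * x ^ 2) := by
      rw [mul_assoc, ← Real.exp_add]
      ring_nf
    _ ≤ 7 * (Real.exp ((c + 1 + 1) ^ 2 / (4 * b)) * Real.exp (-|x|)) := by
      gcongr
      exact exp_mul_abs_sub_mul_sq_le hb (c + 1) x
    _ = 7 * Real.exp ((c + 2) ^ 2 / (4 * b)) * Real.exp (-|x|) := by ring_nf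

section Gaussian

variable {a b : ℝ}

lemma exists_abs_exp_sub_exp_neg_mul_sq_le (ha : 0 < a) (hb : 0 < b) {B : ℝ} (hB : 0 ≤ B)
    (c d : ℝ) :
    ∃ C, 0 ≤ C ∧ ∀ p x ε : ℝ, 0 ≤ ε → |p + a * x ^ 2| ≤ B * ε * (1 + |x| ^ 3) →
      p ≤ d + c * |x| - b * x ^ 2 →
      |Real.exp p - Real.exp (-a * x ^ 2)| ≤ C * ε * Real.exp (-|x|) := by
  refine ⟨7 * B * (Real.exp d * Real.exp ((c + 2) ^ 2 / (4 * b)) +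
    Real.exp ((0 + 2) ^ 2 / (4 * a))), by positivity, fun p x ε hε hpx hp => ?_⟩
  have hexp_p : Real.exp p ≤ Real.exp d * Real.exp (c * |x| - b * x ^ 2) := by
    rw [← Real.exp_add, Real.exp_le_exp]
    linarith
  have hexp_a : Real.exp (-a * x ^ 2) = Real.exp (0 * |x| - a * x ^ 2) := by ring_nf
  calc |Real.exp p - Real.exp (-a * x ^ 2)|
      ≤ |p + a * x ^ 2| * (Real.exp p + Real.exp (-a * x ^ 2)) := by
        rw [← sub_neg_eq_add p, ← neg_mul]
        exact abs_exp_sub_exp_le p (-a * x ^ 2)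
    _ ≤ B * ε * (1 + |x| ^ 3) *
        (Real.exp d * Real.exp (c * |x| - b * x ^ 2) + Real.exp (0 * |x| - a * x ^ 2)) := by
      rw [hexp_a]
      gcongr
    _ = B * ε * (Real.exp d * ((1 + |x| ^ 3) * Real.exp (c * |x| - b * x ^ 2)) +
        (1 + |x| ^ 3) * Real.exp (0 * |x| - a * x ^ 2)) := by ring
    _ ≤ B * ε * (Real.exp d * (7 * Real.exp ((c + 2) ^ 2 / (4 * b)) * Real.exp (-|x|)) +
        7 * Real.exp ((0 + 2) ^ 2 / (4 * a)) * Real.exp (-|x|)) := by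
      gcongr B * ε * (Real.exp d * ?_ + ?_)
      · exact one_add_abs_pow_three_mul_exp_le hb c x
      · exact one_add_abs_pow_three_mul_exp_le ha 0 x
    _ = _ := by ring

lemma exists_abs_gaussian_sub_gaussian_le (ha : 0 < a) :
    ∃ C, 0 ≤ C ∧ ∀ x y : ℝ, |x - y| ≤ 2 →
      |Real.exp (-a * x ^ 2) - Real.exp (-a * y ^ 2)| ≤ C * |x - y| * Real.exp (-|y|) := by
  obtain ⟨C, hC, hbound⟩ := exists_abs_exp_sub_exp_neg_mul_sq_le ha (half_pos ha)
    (by positivity : 0 ≤ 4 * a) 0 (4 * a)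
  refine ⟨C, hC, fun x y hxy => hbound _ _ _ (abs_nonneg _) ?_ ?_⟩
  · have hy : |x + y| ≤ 4 * (1 + |y| ^ 3) := by
      have htriangle : |x + y| ≤ |x - y| + |2 * y| := by
        rw [show x + y = x - y + 2 * y by ring]
        exact abs_add_le _ _
      rw [abs_mul, abs_two] at htriangle
      nlinarith [abs_nonneg y, mul_nonneg (abs_nonneg y) (sq_nonneg (|y| - 1))]
    calc |-a * x ^ 2 + a * y ^ 2| = |-a * (x - y) * (x + y)| := by ring_nf
      _ = a * |x - y| * |x + y| := by rw [abs_mul, abs_mul, abs_neg, abs_of_pos ha]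
      _ ≤ a * |x - y| * (4 * (1 + |y| ^ 3)) := by gcongr
      _ = 4 * a * |x - y| * (1 + |y| ^ 3) := by ring
  · have hsq : (x - y) ^ 2 ≤ 2 ^ 2 := sq_le_sq' (abs_le.1 hxy).1 (abs_le.1 hxy).2
    nlinarith [sq_nonneg (2 * x - y)]

lemma exists_gaussian_le_div_mul_exp_neg_abs (ha : 0 < a) :
    ∃ C, 0 ≤ C ∧ ∀ r x : ℝ, 0 < r → r ≤ |x| →
      Real.exp (-a * x ^ 2) ≤ C / r * Real.exp (-|x|) := by
  refine ⟨Real.exp ((1 + 1) ^ 2 / (4 * a)), by positivity, fun r x hr hx => ?_⟩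
  have hr_exp : r ≤ Real.exp |x| := by linarith [Real.add_one_le_exp |x|]
  rw [div_mul_eq_mul_div, le_div_iff₀ hr]
  calc Real.exp (-a * x ^ 2) * r ≤ Real.exp (-a * x ^ 2) * Real.exp |x| := by gcongr
    _ = Real.exp (1 * |x| - a * x ^ 2) := by
      rw [← Real.exp_add]
      ring_nf
    _ ≤ Real.exp ((1 + 1) ^ 2 / (4 * a)) * Real.exp (-|x|) := exp_mul_abs_sub_mul_sq_le ha 1 x

end Gaussian

/-! ### Lattice sums as integrals of step functions -/

/-- The step function that takes the value `v k` on the cell `[t₀ + k δ, t₀ + (k + 1) δ)` and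
vanishes to the left of `t₀`. -/
noncomputable def latticeStep (t₀ δ : ℝ) (v : ℕ → ℝ) (t : ℝ) : ℝ :=
  if t < t₀ then 0 else v ⌊(t - t₀) / δ⌋₊

lemma latticeStep_of_lt {t₀ δ t : ℝ} (v : ℕ → ℝ) (ht : t < t₀) : latticeStep t₀ δ v t = 0 :=
  if_pos ht

lemma latticeStep_of_mem_Ico {t₀ δ t : ℝ} (v : ℕ → ℝ) (hδ : 0 < δ) {k : ℕ}
    (ht : t ∈ Ico (t₀ + k * δ) (t₀ + (k + 1) * δ)) : latticeStep t₀ δ v t = v k := by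
  have hle : k * δ ≤ t - t₀ := by linarith [ht.1]
  have hlt : t - t₀ < (k + 1) * δ := by linarith [ht.2]
  have hnonneg : 0 ≤ t - t₀ := (mul_nonneg k.cast_nonneg hδ.le).trans hle
  rw [latticeStep, if_neg (not_lt.2 (sub_nonneg.1 hnonneg)),
    (Nat.floor_eq_iff (div_nonneg hnonneg hδ.le)).2
      ⟨(le_div_iff₀ hδ).2 hle, (div_lt_iff₀ hδ).2 hlt⟩]

lemma exists_mem_Ico_of_le {t₀ δ t : ℝ} (hδ : 0 < δ) (ht : t₀ ≤ t) :
    ∃ k : ℕ, t ∈ Ico (t₀ + k * δ) (t₀ + (k + 1) * δ) := by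
  have hle := Nat.floor_le (div_nonneg (sub_nonneg.2 ht) hδ.le)
  have hlt := Nat.lt_floor_add_one ((t - t₀) / δ)
  rw [le_div_iff₀ hδ] at hle
  rw [div_lt_iff₀ hδ] at hlt
  exact ⟨⌊(t - t₀) / δ⌋₊, by linarith, by linarith⟩

section LatticeStep

variable {t₀ δ : ℝ} {v : ℕ → ℝ} {N : ℕ}

lemma integrableOn_Iio_latticeStep (hδ : 0 < δ) (v : ℕ → ℝ) (j : ℕ) :
    IntegrableOn (latticeStep t₀ δ v) (Iio (t₀ + j * δ)) := by
  induction j with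
  | zero =>
    rw [Nat.cast_zero, zero_mul, add_zero]
    exact integrableOn_zero.congr_fun (fun t ht => (latticeStep_of_lt v ht).symm) measurableSet_Iio
  | succ j ih =>
    have hcell : IntegrableOn (latticeStep t₀ δ v) (Ico (t₀ + j * δ) (t₀ + (j + 1) * δ)) :=
      (integrableOn_const (C := v j) (by simp)).congr_fun
        (fun t ht => (latticeStep_of_mem_Ico v hδ ht).symm) measurableSet_Ico
    rw [Nat.cast_succ, ← Iio_union_Ico_eq_Iio (by linarith : t₀ + j * δ ≤ t₀ + (j + 1) * δ)]
    exact ih.union hcell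

lemma setIntegral_Iio_latticeStep (hδ : 0 < δ) (v : ℕ → ℝ) (j : ℕ) :
    ∫ t in Iio (t₀ + j * δ), latticeStep t₀ δ v t = δ * ∑ k ∈ Finset.range j, v k := by
  induction j with
  | zero =>
    rw [Nat.cast_zero, zero_mul, add_zero, Finset.sum_range_zero, mul_zero]
    exact setIntegral_eq_zero_of_forall_eq_zero fun t ht => latticeStep_of_lt v ht
  | succ j ih =>
    have hle : t₀ + j * δ ≤ t₀ + (j + 1) * δ := by linarith
    have hunion := Iio_union_Ico_eq_Iio hle
    have hint := integrableOn_Iio_latticeStep (t₀ := t₀) hδ v (j + 1)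
    have hcell : ∫ t in Ico (t₀ + j * δ) (t₀ + (j + 1) * δ), latticeStep t₀ δ v t = δ * v j := by
      rw [setIntegral_congr_fun measurableSet_Ico fun t ht => latticeStep_of_mem_Ico v hδ ht,
        setIntegral_const, measureReal_def, Real.volume_Ico, ENNReal.toReal_ofReal (by linarith)]
      simp only [smul_eq_mul]
      ring
    rw [Nat.cast_succ] at hint ⊢
    rw [← hunion] at hint ⊢
    rw [setIntegral_union (Set.disjoint_left.2 fun _ ht ht' => ht.not_ge ht'.1) measurableSet_Ico
      hint.left_of_union hint.right_of_union, ih, hcell, Finset.sum_range_succ, mul_add]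

lemma latticeStep_eq_zero_of_le (hδ : 0 < δ) (hv : ∀ k, N ≤ k → v k = 0) {t : ℝ}
    (ht : t₀ + N * δ ≤ t) : latticeStep t₀ δ v t = 0 := by
  have ht₀ : t₀ ≤ t := (le_add_of_nonneg_right (by positivity)).trans ht
  obtain ⟨k, hk⟩ := exists_mem_Ico_of_le hδ ht₀
  rw [latticeStep_of_mem_Ico v hδ hk]
  have hlt : (N : ℝ) < k + 1 := lt_of_mul_lt_mul_right (by linarith [hk.2]) hδ.le
  exact hv k (Nat.lt_succ_iff.1 (mod_cast hlt))

lemma integrable_latticeStep (hδ : 0 < δ) (hv : ∀ k, N ≤ k → v k = 0) :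
    Integrable (latticeStep t₀ δ v) :=
  (integrableOn_iff_integrable_of_support_subset fun _ ht =>
    not_le.1 fun hle => ht (latticeStep_eq_zero_of_le hδ hv hle)).1
    (integrableOn_Iio_latticeStep hδ v N)

lemma integral_latticeStep (hδ : 0 < δ) (hv : ∀ k, N ≤ k → v k = 0) :
    ∫ t, latticeStep t₀ δ v t = δ * ∑ k ∈ Finset.range N, v k :=
  (setIntegral_eq_integral_of_forall_compl_eq_zero fun _ ht =>
    latticeStep_eq_zero_of_le hδ hv (not_lt.1 ht)).symm.trans (setIntegral_Iio_latticeStep hδ v N)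

lemma exists_setIntegral_Iio_latticeStep_eq (hδ : 0 < δ) (hv : ∀ k, N ≤ k → v k = 0) (z : ℝ) :
    ∃ y ∈ Icc z (z + δ), ∫ t in Iio y, latticeStep t₀ δ v t =
      δ * ∑ k ∈ Finset.range N with (t₀ + (k : ℕ) * δ ≤ z), v k := by
  rcases lt_or_ge z t₀ with hz | hz
  · refine ⟨z, ⟨le_rfl, by linarith⟩, ?_⟩
    rw [Finset.filter_false_of_mem fun k _ =>
      not_le.2 (hz.trans_le (le_add_of_nonneg_right (by positivity))), Finset.sum_empty, mul_zero]
    exact setIntegral_eq_zero_of_forall_eq_zero fun t ht => latticeStep_of_lt v (lt_trans ht hz)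
  · obtain ⟨j, hj⟩ := exists_mem_Ico_of_le hδ hz
    refine ⟨t₀ + (j + 1 : ℕ) * δ, ?_, ?_⟩
    · push_cast
      exact ⟨hj.2.le, by linarith [hj.1]⟩
    rw [setIntegral_Iio_latticeStep hδ]
    congr 1
    have hle_iff (k : ℕ) : t₀ + k * δ ≤ z ↔ k < j + 1 := by
      refine ⟨fun hk => ?_, fun hk => ?_⟩
      · have hlt : (k : ℝ) < j + 1 := lt_of_mul_lt_mul_right (by linarith [hj.2]) hδ.le
        exact_mod_cast hlt
      · have hkj : (k : ℝ) ≤ j := mod_cast Nat.lt_succ_iff.1 hk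
        exact (by gcongr : t₀ + k * δ ≤ t₀ + j * δ).trans hj.1
    refine (Finset.sum_subset (fun k hk => ?_) fun k hk hk' => hv k ?_).symm
    · exact Finset.mem_range.2 ((hle_iff k).1 (Finset.mem_filter.1 hk).2)
    · by_contra! hkN
      exact hk' (Finset.mem_filter.2
        ⟨Finset.mem_range.2 hkN, (hle_iff k).2 (Finset.mem_range.1 hk)⟩)

lemma abs_setIntegral_sub_setIntegral_le {α : Type*} [MeasurableSpace α] {μ : Measure α}
    {u f H : α → ℝ} (hu : Integrable u μ) (hf : Integrable f μ) (hH : Integrable H μ)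
    (hle : ∀ t, |u t - f t| ≤ H t) (S : Set α) :
    |(∫ t in S, u t ∂μ) - ∫ t in S, f t ∂μ| ≤ ∫ t, H t ∂μ := by
  rw [← integral_sub hu.integrableOn hf.integrableOn]
  exact (norm_integral_le_of_norm_le (f := fun t => u t - f t) hH.integrableOn
    (.of_forall hle)).trans
      (setIntegral_le_integral hH (.of_forall fun t => (abs_nonneg _).trans (hle t)))

lemma abs_setIntegral_Iio_sub_setIntegral_Iic_le {f : ℝ → ℝ} {c y z : ℝ} (hf : Integrable f)
    (hfc : ∀ t, |f t| ≤ c) (hzy : z ≤ y) :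
    |(∫ t in Iio y, f t) - ∫ t in Iic z, f t| ≤ c * (y - z) := by
  rw [← integral_Iic_eq_integral_Iio,
    intervalIntegral.integral_Iic_sub_Iic hf.integrableOn hf.integrableOn,
    ← abs_of_nonneg (sub_nonneg.2 hzy)]
  exact intervalIntegral.norm_integral_le_of_norm_le_const (f := f) fun t _ => hfc t

/-- The error is `2 ∫ H` because numerator and denominator are compared with `f` separately;
the remaining `c δ` comes from the cell that contains `z`. -/
theorem abs_sum_filter_div_sum_sub_setIntegral_le {f H : ℝ → ℝ} {α c : ℝ} (hδ : 0 < δ)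
    (hv : ∀ k, N ≤ k → v k = 0) (hv_nonneg : ∀ k, 0 ≤ v k)
    (hv_pos : 0 < ∑ k ∈ Finset.range N, v k)
    (hf : Integrable f) (hf_one : ∫ t, f t = 1) (hfc : ∀ t, |f t| ≤ c)
    (hH : Integrable H) (hle : ∀ t, |α * latticeStep t₀ δ v t - f t| ≤ H t) (z : ℝ) :
    |(∑ k ∈ Finset.range N with (t₀ + (k : ℕ) * δ ≤ z), v k) / ∑ k ∈ Finset.range N, v k -
      ∫ t in Iic z, f t| ≤ 2 * (∫ t, H t) + c * δ := by
  obtain ⟨y, hy, hnum⟩ := exists_setIntegral_Iio_latticeStep_eq (t₀ := t₀) hδ hv z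
  set A := ∑ k ∈ Finset.range N with (t₀ + (k : ℕ) * δ ≤ z), v k
  set B := ∑ k ∈ Finset.range N, v k
  have hc : 0 ≤ c := (abs_nonneg _).trans (hfc 0)
  have hAB : A / B ≤ 1 := div_le_one_of_le₀
    (Finset.sum_le_sum_of_subset_of_nonneg (Finset.filter_subset _ _) fun k _ _ => hv_nonneg k)
    hv_pos.le
  have hAB_nonneg : 0 ≤ A / B := div_nonneg (Finset.sum_nonneg fun k _ => hv_nonneg k) hv_pos.le
  have hint := (integrable_latticeStep (t₀ := t₀) hδ hv).const_mul α
  have hden_close : |α * (δ * B) - 1| ≤ ∫ t, H t := by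
    simpa [integral_const_mul, integral_latticeStep hδ hv, hf_one] using
      abs_setIntegral_sub_setIntegral_le hint hf hH hle univ
  have hnum_close : |α * (δ * A) - ∫ t in Iio y, f t| ≤ ∫ t, H t := by
    simpa only [integral_const_mul, hnum] using
      abs_setIntegral_sub_setIntegral_le hint hf hH hle (Iio y)
  have hcell : |(∫ t in Iio y, f t) - ∫ t in Iic z, f t| ≤ c * δ :=
    (abs_setIntegral_Iio_sub_setIntegral_Iic_le hf hfc hy.1).trans
      (mul_le_mul_of_nonneg_left (by linarith [hy.2]) hc)
  have hratio : |A / B - α * (δ * A)| ≤ ∫ t, H t :=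
    calc |A / B - α * (δ * A)| = A / B * |α * (δ * B) - 1| := by
          rw [← abs_of_nonneg hAB_nonneg, ← abs_mul, abs_of_nonneg hAB_nonneg, abs_sub_comm]
          congr 1
          field_simp
      _ ≤ 1 * ∫ t, H t := mul_le_mul hAB hden_close (abs_nonneg _) zero_le_one
      _ = ∫ t, H t := one_mul _
  have htriangle₁ := abs_sub_le (A / B) (α * (δ * A)) (∫ t in Iic z, f t)
  have htriangle₂ := abs_sub_le (α * (δ * A)) (∫ t in Iio y, f t) (∫ t in Iic z, f t)
  linarith

end LatticeStep

/-! ### Level weights against the Gaussian density -/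

lemma exists_abs_stirlingCorr_add_sub_le {p : ℝ} (hp : p ∈ Ioo (0 : ℝ) 1) :
    ∃ B > 0, ∀ n : ℕ, 1 ≤ n → ∃ E : ℝ, ∀ k ≤ n,
      |stirlingCorr k + stirlingCorr (n - k) - E| ≤ B * (1 + (k - n * p) ^ 2 / n) / √n := by
  obtain ⟨B₁, hB₁, hup⟩ := exists_abs_stirlingCorr_sub_le hp.1
  obtain ⟨B₂, hB₂, hdown⟩ := exists_abs_stirlingCorr_sub_le (sub_pos.2 hp.2)
  refine ⟨B₁ + B₂, by positivity, fun n hn => ?_⟩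
  have hnp : 0 ≤ n * p := mul_nonneg n.cast_nonneg hp.1.le
  set j := ⌊n * p⌋₊
  have hjp : |j - n * p| ≤ 1 :=
    abs_le.2 ⟨by linarith [Nat.lt_floor_add_one (n * p)], by linarith [Nat.floor_le hnp]⟩
  have hjn : j ≤ n :=
    Nat.floor_le_of_le (mul_le_of_le_one_right n.cast_nonneg hp.2.le)
  refine ⟨stirlingCorr j + stirlingCorr (n - j), fun k hk => ?_⟩
  have hreflect {i : ℕ} (hi : i ≤ n) : ((n - i : ℕ) : ℝ) - n * (1 - p) = -(i - n * p) := by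
    rw [Nat.cast_sub hi]
    ring
  have hup_k := hup n j k hn hjn hk hjp
  have hdown_k := hdown n (n - j) (n - k) hn (n.sub_le j) (n.sub_le k)
    (by rwa [hreflect hjn, abs_neg])
  rw [hreflect hk, neg_sq] at hdown_k
  calc |stirlingCorr k + stirlingCorr (n - k) - (stirlingCorr j + stirlingCorr (n - j))|
      ≤ |stirlingCorr k - stirlingCorr j| + |stirlingCorr (n - k) - stirlingCorr (n - j)| := by
        rw [add_sub_add_comm]
        exact abs_add_le _ _
    _ ≤ B₁ * (1 + (k - n * p) ^ 2 / n) / √n + B₂ * (1 + (k - n * p) ^ 2 / n) / √n :=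
      add_le_add hup_k hdown_k
    _ = (B₁ + B₂) * (1 + (k - n * p) ^ 2 / n) / √n := by ring

/-- The point `√n (x - m)` at which the magnetization `x` of the `k`-th level sits when the
fluctuations around `m` are measured on the scale `1 / √n`. -/
noncomputable def scaledLevel (m : ℝ) (n k : ℕ) : ℝ := √n * (magLevel n k - m)

lemma scaledLevel_eq {n : ℕ} (hn : n ≠ 0) (m : ℝ) (k : ℕ) :
    scaledLevel m n k = √n * (-1 - m) + k * (2 / √n) := by
  have hsqrt : √(n : ℝ) ≠ 0 := by positivity
  have hdiv : 2 / √(n : ℝ) = √n * (2 / n) := by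
    rw [div_eq_iff hsqrt, mul_right_comm, Real.mul_self_sqrt n.cast_nonneg]
    field_simp
  rw [scaledLevel, magLevel, hdiv]
  field_simp
  ring

lemma sq_scaledLevel (m : ℝ) (n k : ℕ) :
    scaledLevel m n k ^ 2 = n * (magLevel n k - m) ^ 2 := by
  rw [scaledLevel, mul_pow, Real.sq_sqrt n.cast_nonneg]

lemma abs_scaledLevel (m : ℝ) (n k : ℕ) : |scaledLevel m n k| = √n * |magLevel n k - m| := by
  rw [scaledLevel, abs_mul, abs_of_nonneg (Real.sqrt_nonneg _)]

lemma mul_abs_magLevel_sub_pow_three {n : ℕ} (hn : n ≠ 0) (m : ℝ) (k : ℕ) :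
    n * |magLevel n k - m| ^ 3 = (√n)⁻¹ * |scaledLevel m n k| ^ 3 := by
  have hsqrt : √(n : ℝ) ≠ 0 := by positivity
  rw [pow_succ |scaledLevel m n k|, sq_abs, sq_scaledLevel, abs_scaledLevel, pow_succ _ 2, sq_abs]
  field_simp

lemma exists_levelWeight_eq_mul_exp (g : ℝ → ℝ) (hm : m ∈ Ioo (-1 : ℝ) 1) :
    ∃ B > 0, ∀ n : ℕ, 1 ≤ n → ∃ R > 0, ∀ k ≤ n, ∃ e : ℝ,
      |e| ≤ B * (1 + scaledLevel m n k ^ 2) / √n ∧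
      levelWeight n g k =
        R * Real.exp (-n * (freeEnergy g (magLevel n k) - freeEnergy g m) + e) := by
  obtain ⟨B, hB, hE⟩ := exists_abs_stirlingCorr_add_sub_le (p := (1 + m) / 2)
    ⟨by linarith [hm.1], by linarith [hm.2]⟩
  refine ⟨B, hB, fun n hn => ?_⟩
  obtain ⟨E, hE⟩ := hE n hn
  have hn0 : n ≠ 0 := Nat.one_le_iff_ne_zero.1 hn
  refine ⟨Real.exp (-n * freeEnergy g m + stirlingCorr n - E), Real.exp_pos _, fun k hk =>
    ⟨E - (stirlingCorr k + stirlingCorr (n - k)), ?_, ?_⟩⟩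
  · have hdev : (k - n * ((1 + m) / 2)) ^ 2 / n = scaledLevel m n k ^ 2 / 4 := by
      rw [sq_scaledLevel, magLevel]
      field_simp
      ring
    rw [abs_sub_comm]
    refine (hE k hk).trans ?_
    rw [hdev]
    gcongr
    exact div_le_self (sq_nonneg _) (by norm_num)
  · rw [levelWeight_eq_exp g hn0 hk, ← Real.exp_add]
    congr 1
    ring

section Exponent

variable {f : ℝ → ℝ} {m a b M B e : ℝ} {n k : ℕ}

lemma abs_exponent_add_mul_sq_le (hn : n ≠ 0) (hM : 0 ≤ M) (hB : 0 ≤ B)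
    (htaylor : |f (magLevel n k) - f m - a * (magLevel n k - m) ^ 2| ≤ M * |magLevel n k - m| ^ 3)
    (he : |e| ≤ B * (1 + scaledLevel m n k ^ 2) / √n) :
    |-n * (f (magLevel n k) - f m) + e + a * scaledLevel m n k ^ 2| ≤
      (M + 2 * B) * (√n)⁻¹ * (1 + |scaledLevel m n k| ^ 3) := by
  have hcube := mul_abs_magLevel_sub_pow_three hn m k
  have hsq := sq_scaledLevel m n k
  set x := magLevel n k
  set s := scaledLevel m n k
  have hquad : 1 + s ^ 2 ≤ 2 * (1 + |s| ^ 3) := by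
    rw [← sq_abs s]
    nlinarith [abs_nonneg s, mul_nonneg (abs_nonneg s) (sq_nonneg (|s| - 1))]
  calc |-n * (f x - f m) + e + a * s ^ 2|
      = |e - n * (f x - f m - a * (x - m) ^ 2)| := by
        rw [hsq]
        ring_nf
    _ ≤ |e| + n * |f x - f m - a * (x - m) ^ 2| := by
      refine (abs_sub _ _).trans_eq ?_
      rw [abs_mul, Nat.abs_cast]
    _ ≤ B * (1 + s ^ 2) / √n + n * (M * |x - m| ^ 3) := by gcongr
    _ = B * (1 + s ^ 2) / √n + M * ((√n)⁻¹ * |s| ^ 3) := by rw [mul_left_comm, hcube]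
    _ ≤ B * (2 * (1 + |s| ^ 3)) / √n + M * ((√n)⁻¹ * (1 + |s| ^ 3)) := by
      gcongr
      exact le_add_of_nonneg_left zero_le_one
    _ = (M + 2 * B) * (√n)⁻¹ * (1 + |s| ^ 3) := by ring

lemma exponent_le (hm : m ∈ Ioo (-1 : ℝ) 1) (hn : 1 ≤ n) (hk : k ≤ n) (hB : 0 ≤ B)
    (hgrowth : b * (magLevel n k - m) ^ 2 ≤ f (magLevel n k) - f m)
    (he : |e| ≤ B * (1 + scaledLevel m n k ^ 2) / √n) :
    -n * (f (magLevel n k) - f m) + e ≤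
      B + 2 * B * |scaledLevel m n k| - b * scaledLevel m n k ^ 2 := by
  have hmem := magLevel_mem_Icc hk
  have hsqrt : 1 ≤ √(n : ℝ) := Real.one_le_sqrt.2 (mod_cast hn)
  have hdist : |magLevel n k - m| ≤ 2 :=
    abs_le.2 ⟨by linarith [hmem.1, hm.2], by linarith [hmem.2, hm.1]⟩
  have he_le : e ≤ B * (1 + 2 * |scaledLevel m n k|) :=
    calc e ≤ B * (1 + scaledLevel m n k ^ 2) / √n := (le_abs_self e).trans he
      _ = B * (1 / √n + |magLevel n k - m| * |scaledLevel m n k|) := by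
        rw [← sq_abs, sq, abs_scaledLevel]
        field_simp
      _ ≤ B * (1 + 2 * |scaledLevel m n k|) := by
        gcongr
        exact div_le_one_of_le₀ hsqrt (by positivity)
  have hgrowth_n := mul_le_mul_of_nonneg_left hgrowth n.cast_nonneg
  rw [sq_scaledLevel]
  linarith

end Exponent

section LevelWeight

variable {g : ℝ → ℝ} {m a b M : ℝ}

lemma exists_abs_levelWeight_div_sub_le (hm : m ∈ Ioo (-1 : ℝ) 1) (ha : 0 < a) (hb : 0 < b)
    (hM : 0 ≤ M)
    (htaylor : ∀ x ∈ Icc (-1 : ℝ) 1,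
      |freeEnergy g x - freeEnergy g m - a * (x - m) ^ 2| ≤ M * |x - m| ^ 3)
    (hgrowth : ∀ x ∈ Icc (-1 : ℝ) 1, b * (x - m) ^ 2 ≤ freeEnergy g x - freeEnergy g m) :
    ∃ C, 0 ≤ C ∧ ∀ n : ℕ, 1 ≤ n → ∃ R > 0, ∀ k : ℕ,
      |levelWeight n g k / R - Real.exp (-a * scaledLevel m n k ^ 2)| ≤
        C * (√n)⁻¹ * Real.exp (-|scaledLevel m n k|) := by
  have hm1 : 0 < 1 - m := sub_pos.2 hm.2
  obtain ⟨B, hB, hweight⟩ := exists_levelWeight_eq_mul_exp g hm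
  obtain ⟨C₁, hC₁, hexp⟩ := exists_abs_exp_sub_exp_neg_mul_sq_le ha hb
    (by positivity : 0 ≤ M + 2 * B) (2 * B) B
  obtain ⟨C₂, hC₂, htail⟩ := exists_gaussian_le_div_mul_exp_neg_abs ha
  refine ⟨C₁ + C₂ / (1 - m), by positivity, fun n hn => ?_⟩
  obtain ⟨R, hR, hweight⟩ := hweight n hn
  refine ⟨R, hR, fun k => ?_⟩
  rw [add_mul, add_mul]
  rcases le_or_gt k n with hk | hk
  · obtain ⟨e, he, hweight⟩ := hweight k hk
    have hmem := magLevel_mem_Icc hk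
    rw [hweight, mul_div_cancel_left₀ _ hR.ne']
    exact le_add_of_le_of_nonneg (hexp _ _ _ (by positivity)
      (abs_exponent_add_mul_sq_le (Nat.one_le_iff_ne_zero.1 hn) hM hB.le (htaylor _ hmem) he)
      (exponent_le hm hn hk hB.le (hgrowth _ hmem) he)) (by positivity)
  · have hfar : √n * (1 - m) ≤ |scaledLevel m n k| := by
      have hmag : 1 ≤ magLevel n k := by
        have hkn : (n : ℝ) < k := mod_cast hk
        rw [magLevel, one_le_div₀ (by positivity)]
        linarith
      rw [abs_scaledLevel]
      gcongr
      exact (sub_le_sub_right hmag m).trans (le_abs_self _)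
    rw [levelWeight_eq_zero_of_lt g hk, zero_div, zero_sub, abs_neg, Real.abs_exp]
    refine le_add_of_nonneg_of_le (by positivity) ((htail _ _ (by positivity) hfar).trans_eq ?_)
    field_simp

lemma exists_abs_latticeStep_levelWeight_sub_le (hm : m ∈ Ioo (-1 : ℝ) 1) (ha : 0 < a)
    (hb : 0 < b) (hM : 0 ≤ M)
    (htaylor : ∀ x ∈ Icc (-1 : ℝ) 1,
      |freeEnergy g x - freeEnergy g m - a * (x - m) ^ 2| ≤ M * |x - m| ^ 3)
    (hgrowth : ∀ x ∈ Icc (-1 : ℝ) 1, b * (x - m) ^ 2 ≤ freeEnergy g x - freeEnergy g m) :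
    ∃ C, 0 ≤ C ∧ ∀ n : ℕ, 1 ≤ n → ∃ R > 0, ∀ t : ℝ,
      |R⁻¹ * latticeStep (√n * (-1 - m)) (2 / √n) (levelWeight n g) t - Real.exp (-a * t ^ 2)| ≤
        C * (√n)⁻¹ * Real.exp (-|t|) := by
  have hm1 : 0 < 1 + m := by linarith [hm.1]
  obtain ⟨C₁, hC₁, hlevel⟩ := exists_abs_levelWeight_div_sub_le hm ha hb hM htaylor hgrowth
  obtain ⟨C₂, hC₂, hcell⟩ := exists_abs_gaussian_sub_gaussian_le ha
  obtain ⟨C₃, hC₃, htail⟩ := exists_gaussian_le_div_mul_exp_neg_abs ha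
  refine ⟨C₁ * Real.exp 2 + C₂ * 2 + C₃ / (1 + m), by positivity, fun n hn => ?_⟩
  obtain ⟨R, hR, hlevel⟩ := hlevel n hn
  have hsqrt : 1 ≤ √(n : ℝ) := Real.one_le_sqrt.2 (mod_cast hn)
  refine ⟨R, hR, fun t => ?_⟩
  rw [add_mul, add_mul]
  rcases lt_or_ge t (√n * (-1 - m)) with ht | ht
  · have hfar : √n * (1 + m) ≤ |t| := le_abs.2 (.inr (by linarith))
    rw [latticeStep_of_lt _ ht, mul_zero, zero_sub, abs_neg, Real.abs_exp]
    refine le_add_of_nonneg_of_le (by positivity) ((htail _ _ (by positivity) hfar).trans_eq ?_)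
    field_simp
  have hδ : 0 < 2 / √(n : ℝ) := by positivity
  obtain ⟨k, hk⟩ := exists_mem_Ico_of_le hδ ht
  have hs := scaledLevel_eq (Nat.one_le_iff_ne_zero.1 hn) m k
  set s := scaledLevel m n k
  have hst : |s - t| ≤ 2 / √n := abs_le.2 ⟨by linarith [hk.2], by linarith [hk.1]⟩
  have hst_two : |s - t| ≤ 2 := hst.trans (div_le_self zero_le_two hsqrt)
  have hexp : Real.exp (-|s|) ≤ Real.exp 2 * Real.exp (-|t|) := by
    rw [← Real.exp_add, Real.exp_le_exp]
    linarith [abs_sub_abs_le_abs_sub t s, abs_sub_comm t s]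
  rw [latticeStep_of_mem_Ico _ hδ hk, inv_mul_eq_div]
  refine le_add_of_le_of_nonneg ?_ (by positivity)
  calc |levelWeight n g k / R - Real.exp (-a * t ^ 2)|
      ≤ C₁ * (√n)⁻¹ * Real.exp (-|s|) + C₂ * |s - t| * Real.exp (-|t|) :=
        (abs_sub_le _ _ _).trans (add_le_add (hlevel k) (hcell s t hst_two))
    _ ≤ C₁ * (√n)⁻¹ * (Real.exp 2 * Real.exp (-|t|)) + C₂ * (2 / √n) * Real.exp (-|t|) := by
      gcongr
    _ = (C₁ * Real.exp 2 + C₂ * 2) * (√n)⁻¹ * Real.exp (-|t|) := by ring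

end LevelWeight

/-! ### Gibbs measures of functions of the magnetization -/

/-- The probability measure on a finite space whose point masses are proportional to `w`. It
generalizes `cubicMeasure` and is encoded in the same way. -/
noncomputable def gibbsMeasure {Ω : Type*} [Fintype Ω] [MeasurableSpace Ω] (w : Ω → ℝ) :
    Measure Ω :=
  (∑ x, ENNReal.ofReal (w x))⁻¹ • ∑ x, ENNReal.ofReal (w x) • Measure.dirac x

lemma gibbsMeasure_real_setOf {Ω : Type*} [Fintype Ω] [MeasurableSpace Ω]
    [MeasurableSingletonClass Ω] {w : Ω → ℝ} (hw : ∀ x, 0 ≤ w x) (p : Ω → Prop)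
    [DecidablePred p] : (gibbsMeasure w).real {x | p x} = (∑ x with p x, w x) / ∑ x, w x := by
  have hdirac (x : Ω) : (ENNReal.ofReal (w x) • Measure.dirac x) {x | p x} =
      if p x then ENNReal.ofReal (w x) else 0 := by
    rw [Measure.smul_apply, Measure.dirac_apply' x (toFinite _).measurableSet]
    by_cases hx : p x <;> simp [hx]
  rw [measureReal_def, gibbsMeasure, Measure.smul_apply, Measure.finsetSum_apply, smul_eq_mul,
    Finset.sum_congr rfl fun x _ => hdirac x, ← Finset.sum_filter,
    ← ENNReal.ofReal_sum_of_nonneg fun x _ => hw x, ← ENNReal.ofReal_sum_of_nonneg fun x _ => hw x,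
    ENNReal.toReal_mul, ENNReal.toReal_inv,
    ENNReal.toReal_ofReal (Finset.sum_nonneg fun x _ => hw x),
    ENNReal.toReal_ofReal (Finset.sum_nonneg fun x _ => hw x), inv_mul_eq_div]

lemma magPP_eq_magLevel {n : ℕ} (x : Fin n → Bool) :
    magPP n x = magLevel n (Finset.card {i | x i = true}) := by
  have hspin (i : Fin n) : spin (x i) = 2 * (if x i = true then 1 else 0) - 1 := by
    unfold spin
    split_ifs <;> norm_num
  simp only [magPP, magLevel, totalMag, hspin, Finset.sum_sub_distrib, ← Finset.mul_sum]
  simp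

lemma sum_magPP_eq_sum_magLevel (n : ℕ) (f : ℝ → ℝ) :
    ∑ x, f (magPP n x) = ∑ k ∈ Finset.range (n + 1), n.choose k * f (magLevel n k) := by
  have hsubsets := Finset.sum_powerset_apply_card (fun k => f (magLevel n k))
    (x := (Finset.univ : Finset (Fin n)))
  simp only [Finset.card_univ, Fintype.card_fin, nsmul_eq_mul, Finset.powerset_univ] at hsubsets
  rw [← hsubsets]
  refine Finset.sum_nbij' (fun x => Finset.univ.filter fun i => x i = true)
    (fun s i => decide (i ∈ s)) (by simp) (by simp) (fun x _ => by ext; simp)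
    (fun s _ => by ext; simp) fun x _ => ?_
  rw [magPP_eq_magLevel]

lemma gibbsMeasure_real_magPP (n : ℕ) (g : ℝ → ℝ) (p : ℝ → Prop) [DecidablePred p] :
    (gibbsMeasure fun x : Fin n → Bool => Real.exp (n * g (magPP n x))).real {x | p (magPP n x)} =
      (∑ k ∈ Finset.range (n + 1) with p (magLevel n k), levelWeight n g k) /
        ∑ k ∈ Finset.range (n + 1), levelWeight n g k := by
  rw [gibbsMeasure_real_setOf fun _ => (Real.exp_pos _).le, Finset.sum_filter, Finset.sum_filter,
    sum_magPP_eq_sum_magLevel n fun s => if p s then Real.exp (n * g s) else 0,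
    sum_magPP_eq_sum_magLevel n fun s => Real.exp (n * g s)]
  simp only [levelWeight, mul_ite, mul_zero]

lemma totalMag_sub_div_sqrt_le_iff {n : ℕ} (hn : n ≠ 0) (x : Fin n → Bool) {lam : ℝ}
    (hlam : 0 < lam) (m z : ℝ) :
    (totalMag n x - n * m) / √(n / lam) ≤ z ↔ √n * (magPP n x - m) ≤ √lam⁻¹ * z := by
  have hsqrt : 0 < √(n : ℝ) := by positivity
  have hdev : totalMag n x - n * m = √n * (√n * (magPP n x - m)) := by
    rw [← mul_assoc, Real.mul_self_sqrt n.cast_nonneg, magPP]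
    field_simp
  rw [div_eq_mul_inv (n : ℝ), Real.sqrt_mul n.cast_nonneg, hdev,
    mul_div_mul_left _ _ hsqrt.ne', div_le_iff₀' (by positivity)]

/-! ### The normal limit -/

lemma stdNormalCDF_eq_setIntegral {v : NNReal} (hv : v ≠ 0) (z : ℝ) :
    stdNormalCDF z = ∫ t in Iic (√v * z), gaussianPDFReal 0 v t := by
  have hsqrt : 0 < √(v : ℝ) := Real.sqrt_pos.2 (NNReal.coe_pos.2 hv.bot_lt)
  have hmap : (gaussianReal 0 1).map (√(v : ℝ) * ·) = gaussianReal 0 v := by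
    rw [gaussianReal_map_const_mul, mul_zero, mul_one]
    exact congrArg _ (NNReal.eq (Real.sq_sqrt v.coe_nonneg))
  have hpre : (√(v : ℝ) * ·) ⁻¹' Iic (√v * z) = Iic z := by
    ext t
    exact mul_le_mul_iff_right₀ hsqrt
  rw [stdNormalCDF, ← hpre, ← Measure.map_apply (by fun_prop) measurableSet_Iic, hmap,
    gaussianReal_apply_eq_integral 0 hv, ENNReal.toReal_ofReal]
  exact integral_nonneg fun t => gaussianPDFReal_nonneg 0 v t

lemma integral_exp_neg_abs : ∫ t : ℝ, Real.exp (-|t|) = 2 := by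
  rw [integral_comp_abs (f := fun t => Real.exp (-t)), integral_exp_neg_Ioi_zero, mul_one]

theorem exists_abs_levelWeight_cdf_sub_le {g : ℝ → ℝ} {m b M : ℝ} {v : NNReal} (hv : v ≠ 0)
    (hm : m ∈ Ioo (-1 : ℝ) 1) (hb : 0 < b) (hM : 0 ≤ M)
    (htaylor : ∀ x ∈ Icc (-1 : ℝ) 1,
      |freeEnergy g x - freeEnergy g m - (2 * v : ℝ)⁻¹ * (x - m) ^ 2| ≤ M * |x - m| ^ 3)
    (hgrowth : ∀ x ∈ Icc (-1 : ℝ) 1, b * (x - m) ^ 2 ≤ freeEnergy g x - freeEnergy g m) :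
    ∃ c > 0, ∀ n : ℕ, 1 ≤ n → ∀ z : ℝ,
      |(∑ k ∈ Finset.range (n + 1) with scaledLevel m n k ≤ z, levelWeight n g k) /
          ∑ k ∈ Finset.range (n + 1), levelWeight n g k -
        ∫ t in Iic z, gaussianPDFReal 0 v t| ≤ c / √n := by
  have : (0 : ℝ) < v := NNReal.coe_pos.2 hv.bot_lt
  obtain ⟨C, hC, hstep⟩ :=
    exists_abs_latticeStep_levelWeight_sub_le hm (by positivity) hb hM htaylor hgrowth
  set κ := (√(2 * π * v))⁻¹
  have hκ : 0 < κ := by positivity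
  have hpdf (t : ℝ) : gaussianPDFReal 0 v t = κ * Real.exp (-(2 * v : ℝ)⁻¹ * t ^ 2) := by
    rw [gaussianPDFReal, sub_zero, neg_div, div_eq_inv_mul, neg_mul]
  have hpdf_le (t : ℝ) : |gaussianPDFReal 0 v t| ≤ κ := by
    rw [abs_of_nonneg (gaussianPDFReal_nonneg 0 v t), hpdf, neg_mul]
    exact mul_le_of_le_one_right hκ.le (Real.exp_le_one_iff.2 (neg_nonpos.2 (by positivity)))
  have hexp : Integrable fun t : ℝ => Real.exp (-|t|) :=
    .of_integral_ne_zero (by rw [integral_exp_neg_abs]; exact two_ne_zero)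
  refine ⟨κ * (4 * C + 2), by positivity, fun n hn z => ?_⟩
  have hn0 : n ≠ 0 := Nat.one_le_iff_ne_zero.1 hn
  obtain ⟨R, -, hR⟩ := hstep n hn
  simp only [scaledLevel_eq hn0]
  refine (abs_sum_filter_div_sum_sub_setIntegral_le (N := n + 1) (α := κ * R⁻¹) (by positivity)
    (fun k hk => levelWeight_eq_zero_of_lt g hk) (levelWeight_nonneg n g)
    (Finset.sum_pos (fun k hk => levelWeight_pos g (Finset.mem_range_succ_iff.1 hk)) (by simp))
    (integrable_gaussianPDFReal 0 v) (integral_gaussianPDFReal_eq_one 0 hv) hpdf_le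
    (hexp.const_mul (κ * (C * (√n)⁻¹))) (fun t => ?_) z).trans_eq ?_
  · rw [hpdf, mul_assoc κ, ← mul_sub, abs_mul, abs_of_pos hκ, mul_assoc κ]
    exact mul_le_mul_of_nonneg_left (hR t) hκ.le
  · rw [integral_const_mul, integral_exp_neg_abs]
    field_simp
    ring

theorem stmt_8_general {g : ℝ → ℝ} {m : ℝ} (hm : m ∈ Ioo (-1 : ℝ) 1)
    (hg : ContinuousOn g (Icc (-1) 1)) (hg3 : ContDiffAt ℝ 3 g m)
    (hmin : ∀ y ∈ Icc (-1 : ℝ) 1, y ≠ m → freeEnergy g m < freeEnergy g y)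
    (hconv : 0 < iteratedDeriv 2 (freeEnergy g) m) :
    ∃ c > 0, ∀ n : ℕ, 1 ≤ n → ∀ z : ℝ,
      |(gibbsMeasure fun x : Fin n → Bool => Real.exp (n * g (magPP n x))).real
          {x | (totalMag n x - n * m) / √(n / iteratedDeriv 2 (freeEnergy g) m) ≤ z} -
        stdNormalCDF z| ≤ c / √n := by
  have hmem := Ioo_subset_Icc_self hm
  have hcont : ContinuousOn (freeEnergy g) (Icc (-1) 1) := continuous_binEnt.continuousOn.sub hg
  have hsmooth : ContDiffAt ℝ 3 (freeEnergy g) m := (contDiffAt_binEnt hm).sub hg3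
  have hlocal : IsLocalMin (freeEnergy g) m := by
    filter_upwards [Icc_mem_nhds hm.1 hm.2] with y hy
    rcases eq_or_ne y m with rfl | hym
    · exact le_rfl
    · exact (hmin y hy hym).le
  have hcrit := hlocal.deriv_eq_zero
  obtain ⟨M, hM, htaylor⟩ := exists_abs_sub_quadratic_le isCompact_Icc hcont hsmooth hcrit
  obtain ⟨b, hb, hgrowth⟩ :=
    exists_mul_sq_le_sub_of_unique_min isCompact_Icc hcont hsmooth hcrit hconv hmin
  set lam := iteratedDeriv 2 (freeEnergy g) m
  lift lam⁻¹ to NNReal using (inv_pos.2 hconv).le with v hv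
  have hlam : lam / 2 = (2 * v : ℝ)⁻¹ := by rw [hv, mul_inv, inv_inv, inv_mul_eq_div]
  have hv0 : v ≠ 0 := NNReal.coe_ne_zero.1 (hv ▸ (inv_pos.2 hconv).ne')
  obtain ⟨c, hc, hcdf⟩ := exists_abs_levelWeight_cdf_sub_le hv0 hm hb hM (hlam ▸ htaylor) hgrowth
  refine ⟨c, hc, fun n hn z => ?_⟩
  simp only [totalMag_sub_div_sqrt_le_iff (Nat.one_le_iff_ne_zero.1 hn) _ hconv, ← hv]
  rw [gibbsMeasure_real_magPP n g fun s => √n * (s - m) ≤ √v * z, stdNormalCDF_eq_setIntegral hv0]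
  exact hcdf n hn (√v * z)

/-- Uniform Berry–Esseen bound for the rescaled magnetization
`W_n = (S_n − n m*)/√(n/φ''(m*))` of the cubic Curie–Weiss model, when `φ_{K,J}`
has a unique minimizer `m*` in `(−1,1)` with `φ''_{K,J}(m*) > 0`:
`sup_z |P_{n,K,J}(W_n ≤ z) − Φ(z)| ≤ c/√n`. -/
theorem stmt_8 (K J : ℝ) (hK : 0 < K) (mstar : ℝ)
    (hmem : mstar ∈ Set.Ioo (-1 : ℝ) 1)
    (hmin : ∀ y ∈ Set.Icc (-1 : ℝ) 1, phiKJ K J mstar ≤ phiKJ K J y)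
    (huniq : ∀ y ∈ Set.Icc (-1 : ℝ) 1, phiKJ K J y = phiKJ K J mstar → y = mstar)
    (hconv : 0 < iteratedDeriv 2 (phiKJ K J) mstar) :
    ∃ c : ℝ, 0 < c ∧ ∀ n : ℕ, 1 ≤ n → ∀ z : ℝ,
      |cubicProb n K J
          {x | (totalMag n x - n * mstar) /
                Real.sqrt (n / iteratedDeriv 2 (phiKJ K J) mstar) ≤ z}
        - stdNormalCDF z| ≤ c / Real.sqrt n := by
  set g : ℝ → ℝ := fun x => K / 3 * x ^ 3 + J / 2 * x ^ 2
  have hφ : phiKJ K J = freeEnergy g := funext fun x => sub_sub _ _ _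
  have hprob (n : ℕ) (s : Set (Fin n → Bool)) : cubicProb n K J s =
      (gibbsMeasure fun x => Real.exp (n * g (magPP n x))).real s := rfl
  have hstrict (y : ℝ) (hy : y ∈ Icc (-1 : ℝ) 1) (hne : y ≠ mstar) :
      phiKJ K J mstar < phiKJ K J y :=
    (hmin y hy).lt_of_ne fun h => hne (huniq y hy h.symm)
  simp only [hprob]
  rw [hφ] at hstrict hconv ⊢
  exact stmt_8_general hmem (by fun_prop) (by fun_prop) hstrict hconv
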